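/- The fixed-point subalgebra of the simple complex Lie algebra of type D_4 under the automorphism induced by a fixed-point-free order-3 isometry of the root lattice D_4 (acting trivially on no nonzero vector of the Cartan subalgebra) has dimension 8, and being semisimple it is isomorphic to sl_3 (type A_2). -/

import Mathlib

/-!
Irreducibility of the root system produces two roots that generate the root lattice under `f`, and
so identify it with `ℤ[ω]²`, with `f` acting as multiplication by `ω`. The 24 roots meet each of the
eight nonzero residues modulo `1 - ω` in exactly one `f`-orbit, so `L ^ f` has a basis of orbit sums
`E p`, indexed by the nonzero `p ∈ 𝔽₃²`. There `⁅E p, E q⁆` is a multiple of `E (p + q)` that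
vanishes exactly when the symplectic form of `p` and `q` does, as for the Pauli matrices of order
three. On the span of the `E (1, j)` a multiple of `ad E (0, 1)` is a cyclic permutation of order
three, and its eigenvectors are Chevalley generators of `sl₃`.
-/

section Presentation

open LieAlgebra

/-- Two triples of elements of a Lie algebra bracketing like `v k = E k (k + 1)` and
`u k = E (k + 1) k` in `sl₃`, up to the factors `b k` (the matrix units have `b = -1`). -/
structure IsSl3Frame {R K : Type*} [CommRing R] [LieRing K] [LieAlgebra R K]
    (b : Fin 3 → R) (v u : Fin 3 → K) : Prop where
  lie_v_v : ∀ k, ⁅v (k + 1), v (k + 2)⁆ = u k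
  lie_u_u : ∀ k, ⁅u (k + 1), u (k + 2)⁆ = b k • v k
  lie_v_u_of_ne : ∀ k l, k ≠ l → ⁅v k, u l⁆ = 0

namespace IsSl3Frame

variable {R K : Type*} [CommRing R] [LieRing K] [LieAlgebra R K] {b : Fin 3 → R}
  {v u : Fin 3 → K}

lemma sum_lie_v_u (F : IsSl3Frame b v u) : ∑ k, ⁅v k, u k⁆ = 0 := by
  have jacobi := lie_jacobi (v 0) (v 1) (v 2)
  rwa [show ⁅v 1, v 2⁆ = u 0 from F.lie_v_v 0, show ⁅v 2, v 0⁆ = u 1 from F.lie_v_v 1,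
    show ⁅v 0, v 1⁆ = u 2 from F.lie_v_v 2, ← Fin.sum_univ_three fun k ↦ ⁅v k, u k⁆] at jacobi

lemma lie_v_add_one (F : IsSl3Frame b v u) (k : Fin 3) : ⁅v k, v (k + 1)⁆ = u (k + 2) := by
  have h := F.lie_v_v (k + 2)
  rwa [show k + 2 + 1 = k by lia, show k + 2 + 2 = k + 1 by lia] at h

lemma lie_u_add_one (F : IsSl3Frame b v u) (k : Fin 3) :
    ⁅u k, u (k + 1)⁆ = b (k + 2) • v (k + 2) := by
  have h := F.lie_u_u (k + 2)
  rwa [show k + 2 + 1 = k by lia, show k + 2 + 2 = k + 1 by lia] at h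

lemma lie_h_v_of_ne (F : IsSl3Frame b v u) {k l : Fin 3} (hkl : k ≠ l) :
    ⁅⁅v k, u k⁆, v l⁆ = b l • v l := by
  have hl : ⁅u k, v l⁆ = 0 := by rw [← lie_skew, F.lie_v_u_of_ne l k hkl.symm, neg_zero]
  rw [lie_lie, hl, lie_zero, zero_sub]
  obtain rfl | rfl : l = k + 1 ∨ l = k + 2 := by lia
  · rw [F.lie_v_add_one, lie_skew, ← F.lie_u_u (k + 1), show k + 1 + 1 = k + 2 by lia,
      show k + 1 + 2 = k by lia]
  · rw [← lie_skew (v k), lie_neg, neg_neg, ← F.lie_u_add_one, ← F.lie_v_v (k + 1),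
      show k + 1 + 1 = k + 2 by lia, show k + 1 + 2 = k by lia]

lemma lie_h_v (F : IsSl3Frame b v u) (k l : Fin 3) :
    ⁅⁅v k, u k⁆, v l⁆ = (b l - if k = l then 3 * b l else 0) • v l := by
  split_ifs with hkl
  · subst hkl
    have h := congrArg (⁅·, v k⁆) F.sum_lie_v_u
    simp only [sum_lie, zero_lie] at h
    rw [← Finset.add_sum_erase _ _ (Finset.mem_univ k), Finset.sum_congr rfl fun l hl ↦
      F.lie_h_v_of_ne (Finset.ne_of_mem_erase hl), Finset.sum_const,
      Finset.card_erase_of_mem (Finset.mem_univ k), Finset.card_fin] at h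
    rw [eq_neg_of_add_eq_zero_left h]
    module
  · rw [F.lie_h_v_of_ne hkl, sub_zero]

lemma lie_h_u (F : IsSl3Frame b v u) (k l : Fin 3) :
    ⁅⁅v k, u k⁆, u l⁆ = (∑ j, b j - b l - if k = l then 0 else 3 * b k) • u l := by
  rw [← F.lie_v_v l, leibniz_lie, F.lie_h_v, F.lie_h_v, smul_lie, lie_smul, ← add_smul]
  congr 1
  fin_cases k <;> fin_cases l <;> simp [Fin.sum_univ_three] <;> ring

lemma lie_h_h (F : IsSl3Frame b v u) (k l : Fin 3) :
    ⁅⁅v k, u k⁆, ⁅v l, u l⁆⁆ = (∑ j, b j - 3 * b k) • ⁅v l, u l⁆ := by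
  rw [leibniz_lie, F.lie_h_v, F.lie_h_u, smul_lie, lie_smul, ← add_smul]
  congr 1
  split_ifs with hkl
  · subst hkl; ring
  · ring

lemma lie_sum_v_sum_v (F : IsSl3Frame b v u) (a c : Fin 3 → R) :
    ⁅∑ k, a k • v k, ∑ k, c k • v k⁆ =
      ∑ k, (a (k + 1) * c (k + 2) - a (k + 2) * c (k + 1)) • u k := by
  have h10 := lie_skew (v 1) (v 0)
  have h21 := lie_skew (v 2) (v 1)
  have h02 := lie_skew (v 0) (v 2)
  have h01 := F.lie_v_add_one 0
  have h12 := F.lie_v_add_one 1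
  have h20 := F.lie_v_add_one 2
  simp only [Fin.reduceAdd] at h01 h12 h20
  simp only [Fin.sum_univ_three, lie_add, add_lie, lie_smul, smul_lie, lie_self, ← h10, ← h21,
    ← h02, h01, h12, h20, Fin.reduceAdd]
  module

lemma lie_sum_u_sum_u (F : IsSl3Frame b v u) (a c : Fin 3 → R) :
    ⁅∑ k, a k • u k, ∑ k, c k • u k⁆ =
      ∑ k, ((a (k + 1) * c (k + 2) - a (k + 2) * c (k + 1)) * b k) • v k := by
  have h10 := lie_skew (u 1) (u 0)
  have h21 := lie_skew (u 2) (u 1)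
  have h02 := lie_skew (u 0) (u 2)
  have h01 := F.lie_u_add_one 0
  have h12 := F.lie_u_add_one 1
  have h20 := F.lie_u_add_one 2
  simp only [Fin.reduceAdd] at h01 h12 h20
  simp only [Fin.sum_univ_three, lie_add, add_lie, lie_smul, smul_lie, lie_self, ← h10, ← h21,
    ← h02, h01, h12, h20, Fin.reduceAdd]
  module

lemma lie_sum_v_sum_u (F : IsSl3Frame b v u) (a c : Fin 3 → R) :
    ⁅∑ k, a k • v k, ∑ k, c k • u k⁆ = ∑ k, (a k * c k) • ⁅v k, u k⁆ := by
  simp only [sum_lie, lie_sum, lie_smul, smul_lie]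
  refine Finset.sum_congr rfl fun k _ ↦ ?_
  rw [Finset.sum_eq_single k (fun l _ hl ↦ by rw [F.lie_v_u_of_ne l k hl, smul_zero])
    (by simp), smul_smul, mul_comm]

/-- The image in `K` of the trace zero matrix with diagonal `d` and zeros elsewhere. -/
def diagonal (v u : Fin 3 → K) (d : Fin 3 → R) : K := d 0 • ⁅v 0, u 0⁆ - d 2 • ⁅v 1, u 1⁆

lemma sum_smul_lie_v_u (F : IsSl3Frame b v u) (x : Fin 3 → R) :
    ∑ k, x k • ⁅v k, u k⁆ = diagonal v u fun k ↦ x k - x (k + 2) := by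
  have hsum := F.sum_lie_v_u
  rw [Fin.sum_univ_three] at hsum
  rw [Fin.sum_univ_three, eq_neg_of_add_eq_zero_right hsum]
  simp only [diagonal, Fin.reduceAdd]
  module

lemma lie_diagonal_v (F : IsSl3Frame (-1 : Fin 3 → R) v u) {d : Fin 3 → R} (hd : ∑ k, d k = 0)
    (k : Fin 3) : ⁅diagonal v u d, v k⁆ = (d k - d (k + 1)) • v k := by
  rw [Fin.sum_univ_three] at hd
  rw [diagonal, sub_lie, smul_lie, smul_lie, F.lie_h_v, F.lie_h_v, smul_smul, smul_smul, ← sub_smul]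
  congr 1
  fin_cases k <;> simp
  · linear_combination hd
  · linear_combination -hd
  · ring

lemma lie_diagonal_u (F : IsSl3Frame (-1 : Fin 3 → R) v u) {d : Fin 3 → R} (hd : ∑ k, d k = 0)
    (k : Fin 3) : ⁅diagonal v u d, u k⁆ = (d (k + 1) - d k) • u k := by
  rw [← F.lie_v_v k, leibniz_lie, F.lie_diagonal_v hd, F.lie_diagonal_v hd, smul_lie, lie_smul,
    ← add_smul, show k + 1 + 1 = k + 2 by lia, show k + 2 + 1 = k by lia, sub_add_sub_cancel]

lemma lie_diagonal_sum_v (F : IsSl3Frame (-1 : Fin 3 → R) v u) {d : Fin 3 → R}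
    (hd : ∑ k, d k = 0) (a : Fin 3 → R) :
    ⁅diagonal v u d, ∑ k, a k • v k⁆ = ∑ k, (a k * (d k - d (k + 1))) • v k := by
  simp only [lie_sum, lie_smul, F.lie_diagonal_v hd, smul_smul]

lemma lie_diagonal_sum_u (F : IsSl3Frame (-1 : Fin 3 → R) v u) {d : Fin 3 → R}
    (hd : ∑ k, d k = 0) (a : Fin 3 → R) :
    ⁅diagonal v u d, ∑ k, a k • u k⁆ = ∑ k, (a k * (d (k + 1) - d k)) • u k := by
  simp only [lie_sum, lie_smul, F.lie_diagonal_u hd, smul_smul]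

lemma lie_diagonal_diagonal (F : IsSl3Frame (-1 : Fin 3 → R) v u) (d e : Fin 3 → R) :
    ⁅diagonal v u d, diagonal v u e⁆ = 0 := by
  have hh (k l : Fin 3) : ⁅⁅v k, u k⁆, ⁅v l, u l⁆⁆ = 0 := by
    rw [F.lie_h_h, Fin.sum_univ_three]
    simp only [Pi.neg_apply, Pi.one_apply]
    module
  simp only [diagonal, sub_lie, lie_sub, smul_lie, lie_smul, hh, smul_zero, sub_zero]

/-- The linear map `sl₃ → K` sending the matrix units `E k (k + 1)` and `E (k + 1) k` to `v k`
and `u k`. -/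
def toLinearMap (R : Type*) {K : Type*} [CommRing R] [LieRing K] [LieAlgebra R K]
    (v u : Fin 3 → K) : SpecialLinear.sl (Fin 3) R →ₗ[R] K where
  toFun M := ∑ k, M.1 k (k + 1) • v k + ∑ k, M.1 (k + 1) k • u k + diagonal v u fun k ↦ M.1 k k
  map_add' M N := by
    simp only [AddMemClass.coe_add, Matrix.add_apply, Fin.sum_univ_three, diagonal]
    module
  map_smul' c M := by
    simp only [SetLike.val_smul, Matrix.smul_apply, Fin.sum_univ_three, RingHom.id_apply, diagonal]
    module

lemma toLinearMap_lie (F : IsSl3Frame (-1 : Fin 3 → R) v u) (M N : SpecialLinear.sl (Fin 3) R) :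
    toLinearMap R v u ⁅M, N⁆ = ⁅toLinearMap R v u M, toLinearMap R v u N⁆ := by
  have hM : ∑ k, M.1 k k = 0 := M.2
  have hN : ∑ k, N.1 k k = 0 := N.2
  simp only [toLinearMap, LinearMap.coe_mk, AddHom.coe_mk, add_lie, lie_add]
  rw [F.lie_diagonal_diagonal, F.lie_diagonal_sum_v hM, F.lie_diagonal_sum_u hM,
    ← lie_skew _ (diagonal v u fun k ↦ N.1 k k), F.lie_diagonal_sum_v hN,
    ← lie_skew _ (diagonal v u fun k ↦ N.1 k k), F.lie_diagonal_sum_u hN,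
    F.lie_sum_v_sum_v, F.lie_sum_u_sum_u, F.lie_sum_v_sum_u,
    ← lie_skew (∑ k, M.1 (k + 1) k • u k), F.lie_sum_v_sum_u, F.sum_smul_lie_v_u,
    F.sum_smul_lie_v_u]
  simp only [diagonal, Fin.sum_univ_three, Fin.isValue, Fin.reduceAdd, Pi.neg_apply, Pi.one_apply,
    LieSubalgebra.coe_bracket, Ring.lie_def, Matrix.sub_apply, Matrix.mul_apply]
  module

/-- The homomorphism from `sl₃` determined by a normalised frame. -/
def toLieHom (F : IsSl3Frame (-1 : Fin 3 → R) v u) : SpecialLinear.sl (Fin 3) R →ₗ⁅R⁆ K where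
  __ := toLinearMap R v u
  map_lie' := F.toLinearMap_lie _ _

lemma v_mem_range_toLieHom (F : IsSl3Frame (-1 : Fin 3 → R) v u) (k : Fin 3) :
    v k ∈ F.toLieHom.range := by
  refine ⟨⟨Matrix.single k (k + 1) 1, Matrix.trace_single_eq_of_ne k (k + 1) 1 (by lia)⟩, ?_⟩
  fin_cases k <;> simp [toLieHom, toLinearMap, diagonal, Fin.sum_univ_three]

end IsSl3Frame

namespace IsSl3Frame

variable {k K : Type*} [Field k] [LieRing K] [LieAlgebra k K] {b : Fin 3 → k} {v u : Fin 3 → K}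

lemma smul (F : IsSl3Frame b v u) (t : k) :
    IsSl3Frame (fun l ↦ t ^ 3 * b l) (fun l ↦ t • v l) (fun l ↦ t ^ 2 • u l) where
  lie_v_v l := by simp only [smul_lie, lie_smul, F.lie_v_v]; module
  lie_u_u l := by simp only [smul_lie, lie_smul, F.lie_u_u]; module
  lie_v_u_of_ne l m h := by simp only [smul_lie, lie_smul, F.lie_v_u_of_ne l m h, smul_zero]

/-- `⁅h, h⁆ = 0` for `h = ⁅v i, u i⁆` ties `b i` to the sum of all the `b j`. -/
lemma three_mul_eq_sum (F : IsSl3Frame b v u) {l : Fin 3} (hl : b l • v l ≠ 0) (i : Fin 3) :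
    3 * b i = ∑ j, b j := by
  have of_ne {i : Fin 3} (hi : i ≠ l) : 3 * b i = ∑ j, b j := by
    have hh : ⁅v i, u i⁆ ≠ 0 := fun h ↦ hl (by rw [← F.lie_h_v_of_ne hi, h, zero_lie])
    have hself := F.lie_h_h i i
    rw [lie_self, eq_comm, smul_eq_zero_iff_left hh, sub_eq_zero] at hself
    exact hself.symm
  obtain rfl | hi := eq_or_ne i l
  · have h1 := of_ne (i := i + 1) (by lia)
    have h2 := of_ne (i := i + 2) (by lia)
    have hsum : ∑ j, b j = b i + b (i + 1) + b (i + 2) := by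
      simpa [Fin.sum_univ_three] using (Equiv.sum_comp (Equiv.addLeft i) b).symm
    linear_combination -3 * hsum - h1 - h2
  · exact of_ne hi

theorem exists_normalized [IsAlgClosed k] [NeZero (3 : k)] (F : IsSl3Frame b v u) {l : Fin 3}
    (hl : b l • v l ≠ 0) : ∃ t : k, t ≠ 0 ∧
      IsSl3Frame (-1 : Fin 3 → k) (fun l ↦ t • v l) (fun l ↦ t ^ 2 • u l) := by
  have hb (i : Fin 3) : b i = b l := mul_left_cancel₀ (NeZero.ne (3 : k))
    ((F.three_mul_eq_sum hl i).trans (F.three_mul_eq_sum hl l).symm)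
  have hbl : b l ≠ 0 := left_ne_zero_of_smul hl
  obtain ⟨t, ht⟩ := IsAlgClosed.exists_pow_nat_eq (-(b l)⁻¹) (n := 3) (by simp)
  refine ⟨t, ?_, ?_⟩
  · rintro rfl
    simp [hbl] at ht
  · convert F.smul t with i
    rw [hb, ht]
    simp [hbl]

end IsSl3Frame

lemma finrank_sl_add_one (R n : Type*) [Field R] [Fintype n] [DecidableEq n] [Nonempty n] :
    Module.finrank R (SpecialLinear.sl n R) + 1 = Fintype.card n ^ 2 := by
  have h := (Matrix.traceLinearMap n R R).finrank_range_add_finrank_ker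
  rw [LinearMap.range_eq_top.2 Matrix.trace_surjective, finrank_top, Module.finrank_self,
    Module.finrank_matrix, Module.finrank_self, mul_one, ← pow_two, add_comm] at h
  exact h

end Presentation

section Eigenvectors

open Module

lemma mem_span_singleton_of_mem_eigenspace {k V ι : Type*} [Field k] [AddCommGroup V] [Module k V]
    {f : End k V} {μ : ι → k} (hμ : Function.Injective μ) {v : ι → V}
    (hv : ∀ i, v i ∈ f.eigenspace (μ i)) {x : V} (hx : x ∈ Submodule.span k (Set.range v)) {i : ι}
    (hxi : x ∈ f.eigenspace (μ i)) : x ∈ Submodule.span k {v i} := by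
  have hrange : Set.range v = insert (v i) (v '' {i}ᶜ) := by
    rw [← Set.image_insert_eq, Set.insert_eq, Set.union_compl_self, Set.image_univ]
  rw [hrange, Submodule.mem_span_insert] at hx
  obtain ⟨c, y, hy, rfl⟩ := hx
  have hyi : y ∈ f.eigenspace (μ i) := by
    simpa using sub_mem hxi (Submodule.smul_mem _ c (hv i))
  have hle : Submodule.span k (v '' {i}ᶜ) ≤ ⨆ j ≠ μ i, f.eigenspace j := by
    rw [Submodule.span_le]
    rintro _ ⟨j, hj, rfl⟩
    exact Submodule.mem_iSup_of_mem (μ j) (Submodule.mem_iSup_of_mem (hμ.ne hj) (hv j))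
  rw [Submodule.disjoint_def.1 (f.eigenspaces_iSupIndep (μ i)) y hyi (hle hy), add_zero]
  exact Submodule.smul_mem _ c (Submodule.mem_span_singleton_self _)

lemma map_mem_span_of_mem_eigenspace {R V ι : Type*} [CommRing R] [AddCommGroup V] [Module R V]
    {f : End R V} {μ : ι → R} {v : ι → V} (hv : ∀ i, v i ∈ f.eigenspace (μ i)) {x : V}
    (hx : x ∈ Submodule.span R (Set.range v)) : f x ∈ Submodule.span R (Set.range v) := by
  suffices h : Submodule.span R (Set.range v) ≤ (Submodule.span R (Set.range v)).comap f from h hx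
  rw [Submodule.span_le]
  rintro _ ⟨i, rfl⟩
  rw [SetLike.mem_coe, Submodule.mem_comap, End.mem_eigenspace_iff.1 (hv i)]
  exact Submodule.smul_mem _ _ (Submodule.subset_span ⟨i, rfl⟩)

variable {k V : Type*} [Field k] [AddCommGroup V] [Module k V]

/-- For `f (f (f x)) = x` and `μ ^ 3 = 1`, a multiple of the component of `x` in the
`μ`-eigenspace of `f`. -/
def cubicEigenvector (f : End k V) (x : V) (μ : k) : V := μ ^ 2 • x + μ • f x + f (f x)

lemma cubicEigenvector_mem_eigenspace {f : End k V} {x : V} (hx : f (f (f x)) = x) {μ : k}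
    (hμ : μ ^ 3 = 1) : cubicEigenvector f x μ ∈ f.eigenspace μ := by
  rw [End.mem_eigenspace_iff, cubicEigenvector]
  simp only [map_add, map_smul, hx, smul_add, smul_smul]
  rw [← pow_succ', hμ]
  module

lemma mem_span_range_cubicEigenvector [NeZero (3 : k)] {ω : k} (hω : IsPrimitiveRoot ω 3)
    (f : End k V) (x : V) :
    x ∈ Submodule.span k (Set.range fun i : Fin 3 ↦ cubicEigenvector f x (ω ^ (i : ℕ))) := by
  have hsum : ∑ i : Fin 3, ω ^ (i : ℕ) • cubicEigenvector f x (ω ^ (i : ℕ)) = (3 : k) • x := by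
    have h0 : 1 + ω + ω ^ 2 = 0 := by
      simpa [Finset.sum_range_succ] using hω.geom_sum_eq_zero (by norm_num)
    have h3 : ω ^ 3 = 1 := hω.pow_eq_one
    simp only [Fin.sum_univ_three, cubicEigenvector, Fin.coe_ofNat_eq_mod, Nat.reduceMod]
    match_scalars
    · linear_combination (1 + ω ^ 3) * h3 + h3
    · linear_combination h0 + ω * h3
    · linear_combination h0
  rw [← Submodule.smul_mem_iff _ (NeZero.ne (3 : k)), ← hsum]
  exact sum_mem fun i _ ↦ Submodule.smul_mem _ _ (Submodule.subset_span ⟨i, rfl⟩)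

end Eigenvectors

section PauliBasis

open LieAlgebra Module

lemma lie_mem_of_mem_span {R K : Type*} [CommRing R] [LieRing K] [LieAlgebra R K] {s t : Set K}
    {N : Submodule R K} (h : ∀ x ∈ s, ∀ y ∈ t, ⁅x, y⁆ ∈ N) {x y : K} (hx : x ∈ Submodule.span R s)
    (hy : y ∈ Submodule.span R t) : ⁅x, y⁆ ∈ N := by
  induction hx, hy using Submodule.span_induction₂ with
  | mem_mem x y hx hy => exact h x hx y hy
  | zero_left y _ => rw [zero_lie]; exact zero_mem _
  | zero_right x _ => rw [lie_zero]; exact zero_mem _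
  | add_left x y z _ _ _ hx hy => rw [add_lie]; exact add_mem hx hy
  | add_right x y z _ _ _ hx hy => rw [lie_add]; exact add_mem hx hy
  | smul_left c x y _ _ h => rw [smul_lie]; exact Submodule.smul_mem _ c h
  | smul_right c x y _ _ h => rw [lie_smul]; exact Submodule.smul_mem _ c h

lemma lie_mem_eigenspace_ad {R K : Type*} [CommRing R] [LieRing K] [LieAlgebra R K] {θ x y : K}
    {a c : R} (hx : x ∈ (ad R K θ).eigenspace a) (hy : y ∈ (ad R K θ).eigenspace c) :
    ⁅x, y⁆ ∈ (ad R K θ).eigenspace (a + c) := by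
  rw [End.mem_eigenspace_iff, ad_apply] at *
  rw [leibniz_lie, hx, hy, smul_lie, lie_smul, add_smul]

/-- The symplectic form on the plane over the field with three elements. -/
def symplecticForm (p q : ZMod 3 × ZMod 3) : ZMod 3 := p.1 * q.2 - p.2 * q.1

lemma add_ne_zero_of_symplecticForm_ne_zero :
    ∀ p q : ZMod 3 × ZMod 3, symplecticForm p q ≠ 0 → p + q ≠ 0 := by
  decide

/-- A basis `E p`, `p ≠ 0`, of a Lie algebra which brackets, up to nonzero factors, like the Pauli
matrices `X ^ p.1 * Z ^ p.2` of order three. The value `E 0` is irrelevant. -/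
structure IsPauliBasis (k : Type*) {K : Type*} [Field k] [LieRing K] [LieAlgebra k K]
    (E : ZMod 3 × ZMod 3 → K) : Prop where
  linearIndependent : LinearIndependent k fun p : {p : ZMod 3 × ZMod 3 // p ≠ 0} ↦ E p
  span_eq_top : Submodule.span k (E '' {0}ᶜ) = ⊤
  lie_eq_zero : ∀ p q, p ≠ 0 → q ≠ 0 → symplecticForm p q = 0 → ⁅E p, E q⁆ = 0
  exists_lie_eq_smul : ∀ p q, symplecticForm p q ≠ 0 → ∃ c : k, c ≠ 0 ∧ ⁅E p, E q⁆ = c • E (p + q)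

namespace IsPauliBasis

variable {k K : Type*} [Field k] [LieRing K] [LieAlgebra k K] {E : ZMod 3 × ZMod 3 → K}
  {S : LieSubalgebra k K}

lemma finrank_eq_eight (hE : IsPauliBasis k E) : finrank k K = 8 := by
  have hspan : ⊤ ≤ Submodule.span k (Set.range fun p : {p : ZMod 3 × ZMod 3 // p ≠ 0} ↦ E p) := by
    rw [← hE.span_eq_top, Set.image_eq_range]
    rfl
  rw [finrank_eq_card_basis (Basis.mk hE.linearIndependent hspan)]
  decide

lemma mem_of_mem_of_mem (hE : IsPauliBasis k E) {p q : ZMod 3 × ZMod 3}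
    (hpq : symplecticForm p q ≠ 0) (hp : E p ∈ S) (hq : E q ∈ S) : E (p + q) ∈ S := by
  obtain ⟨c, hc, h⟩ := hE.exists_lie_eq_smul p q hpq
  have := S.lie_mem hp hq
  rwa [h, ← LieSubalgebra.mem_toSubmodule, S.toSubmodule.smul_mem_iff hc] at this

lemma lieSubalgebra_eq_top (hE : IsPauliBasis k E) (hS : ∀ j, E (1, j) ∈ S) : S = ⊤ := by
  have form_row_one : ∀ j : ZMod 3, symplecticForm (1, 2 * j + 1) (1, 2 * j + 2) ≠ 0 ∧
      ((1, 2 * j + 1) + (1, 2 * j + 2) : ZMod 3 × ZMod 3) = (2, j) := by decide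
  have form_row_two : ∀ j : ZMod 3, j ≠ 0 → symplecticForm (1, 0) (2, j) ≠ 0 ∧
      ((1, 0) + (2, j) : ZMod 3 × ZMod 3) = (0, j) := by decide
  have h2 (j : ZMod 3) : E (2, j) ∈ S :=
    (form_row_one j).2 ▸ hE.mem_of_mem_of_mem (form_row_one j).1 (hS _) (hS _)
  have h0 (j : ZMod 3) (hj : j ≠ 0) : E (0, j) ∈ S :=
    (form_row_two j hj).2 ▸ hE.mem_of_mem_of_mem (form_row_two j hj).1 (hS _) (h2 _)
  rw [← LieSubalgebra.toSubmodule_inj, LieSubalgebra.top_toSubmodule, eq_top_iff,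
    ← hE.span_eq_top, Submodule.span_le]
  rintro _ ⟨⟨i, j⟩, hp, rfl⟩
  fin_cases i
  · exact h0 j (by rintro rfl; exact hp rfl)
  · exact hS j
  · exact h2 j

end IsPauliBasis

/-- The span of the elements `E (i, j)`; for a Pauli basis `E` these are the graded pieces of a
grading by the first coordinate. -/
def pauliRow (k : Type*) {K : Type*} [Field k] [LieRing K] [LieAlgebra k K]
    (E : ZMod 3 × ZMod 3 → K) (i : ZMod 3) : Submodule k K :=
  Submodule.span k (E '' {p | p ≠ 0 ∧ p.1 = i})

namespace IsPauliBasis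

variable {k K : Type*} [Field k] [LieRing K] [LieAlgebra k K] {E : ZMod 3 × ZMod 3 → K}

lemma mem_pauliRow {p : ZMod 3 × ZMod 3} (hp : p ≠ 0) {i : ZMod 3} (hi : p.1 = i) :
    E p ∈ pauliRow k E i :=
  Submodule.subset_span ⟨p, ⟨hp, hi⟩, rfl⟩

lemma lie_mem_pauliRow (hE : IsPauliBasis k E) {i j l : ZMod 3} (hij : i + j = l) {x y : K}
    (hx : x ∈ pauliRow k E i) (hy : y ∈ pauliRow k E j) : ⁅x, y⁆ ∈ pauliRow k E l := by
  subst hij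
  refine lie_mem_of_mem_span ?_ hx hy
  rintro _ ⟨p, ⟨hp, rfl⟩, rfl⟩ _ ⟨q, ⟨hq, rfl⟩, rfl⟩
  by_cases hpq : symplecticForm p q = 0
  · rw [hE.lie_eq_zero p q hp hq hpq]
    exact zero_mem _
  · obtain ⟨c, -, h⟩ := hE.exists_lie_eq_smul p q hpq
    rw [h]
    exact Submodule.smul_mem _ c (mem_pauliRow (add_ne_zero_of_symplecticForm_ne_zero p q hpq)
      (Prod.fst_add p q))

lemma lie_eq_zero_of_mem_pauliRow_zero (hE : IsPauliBasis k E) {x y : K}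
    (hx : x ∈ pauliRow k E 0) (hy : y ∈ pauliRow k E 0) : ⁅x, y⁆ = 0 := by
  refine (Submodule.mem_bot k).1 (lie_mem_of_mem_span ?_ hx hy)
  rintro _ ⟨p, ⟨hp, hp0⟩, rfl⟩ _ ⟨q, ⟨hq, hq0⟩, rfl⟩
  rw [hE.lie_eq_zero p q hp hq (by simp [symplecticForm, hp0, hq0])]
  exact zero_mem _

lemma ne_zero (hE : IsPauliBasis k E) {p : ZMod 3 × ZMod 3} (hp : p ≠ 0) : E p ≠ 0 :=
  hE.linearIndependent.ne_zero ⟨p, hp⟩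

/-- A rescaling `θ` of `E (0, 1)` acts on the span of the `E (1, j)` as a cyclic permutation of a
suitable basis. -/
lemma exists_cyclic_generator [IsAlgClosed k] (hE : IsPauliBasis k E) :
    ∃ θ ∈ pauliRow k E 0, ⁅θ, ⁅θ, ⁅θ, E (1, 0)⁆⁆⁆ = E (1, 0) ∧
      (∃ c : k, E (1, 1) = c • ⁅θ, E (1, 0)⁆) ∧ ∃ c : k, E (1, 2) = c • ⁅θ, ⁅θ, E (1, 0)⁆⁆ := by
  obtain ⟨c₀, hc₀, h₀⟩ := hE.exists_lie_eq_smul (0, 1) (1, 0) (by decide)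
  obtain ⟨c₁, hc₁, h₁⟩ := hE.exists_lie_eq_smul (0, 1) (1, 1) (by decide)
  obtain ⟨c₂, hc₂, h₂⟩ := hE.exists_lie_eq_smul (0, 1) (1, 2) (by decide)
  rw [show ((0, 1) + (1, 0) : ZMod 3 × ZMod 3) = (1, 1) by decide] at h₀
  rw [show ((0, 1) + (1, 1) : ZMod 3 × ZMod 3) = (1, 2) by decide] at h₁
  rw [show ((0, 1) + (1, 2) : ZMod 3 × ZMod 3) = (1, 0) by decide] at h₂
  obtain ⟨s, hs⟩ := IsAlgClosed.exists_pow_nat_eq (c₀ * c₁ * c₂)⁻¹ (n := 3) (by simp)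
  have hs0 : s ≠ 0 := by
    rintro rfl
    simp [hc₀, hc₁, hc₂] at hs
  refine ⟨s • E (0, 1), Submodule.smul_mem _ s (mem_pauliRow (by decide) rfl), ?_,
    ⟨(s * c₀)⁻¹, ?_⟩, ⟨(s ^ 2 * c₀ * c₁)⁻¹, ?_⟩⟩
  all_goals simp only [smul_lie, lie_smul, h₀, h₁, h₂, smul_smul]
  · rw [show s * c₀ * (s * c₁) * (s * c₂) = s ^ 3 * (c₀ * c₁ * c₂) by ring, hs,
      inv_mul_cancel₀ (by simp [hc₀, hc₁, hc₂]), one_smul]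
  · rw [inv_mul_cancel₀ (mul_ne_zero hs0 hc₀), one_smul]
  · rw [show s * c₀ * (s * c₁) = s ^ 2 * c₀ * c₁ by ring, inv_mul_cancel₀ (by simp [*]), one_smul]

lemma isSl3Frame_of_eigenvectors (hE : IsPauliBasis k E) {θ : K} (hθ : θ ∈ pauliRow k E 0)
    {μ : Fin 3 → k} (hμ : Function.Injective μ) (hsum : ∑ i, μ i = 0) {v : Fin 3 → K}
    (hv : ∀ i, v i ∈ (ad k K θ).eigenspace (μ i)) (hrow : ∀ i, v i ∈ pauliRow k E 1)
    (hspan : ∀ j, E (1, j) ∈ Submodule.span k (Set.range v)) :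
    ∃ b : Fin 3 → k, IsSl3Frame b v fun i ↦ ⁅v (i + 1), v (i + 2)⁆ := by
  have hμsum (i : Fin 3) : μ (i + 1) + μ (i + 2) = -μ i := by
    rw [← Equiv.sum_comp (Equiv.addLeft i), Fin.sum_univ_three] at hsum
    simp only [Equiv.coe_addLeft, add_zero] at hsum
    linear_combination hsum
  have hu (i : Fin 3) : ⁅v (i + 1), v (i + 2)⁆ ∈ (ad k K θ).eigenspace (-μ i) :=
    hμsum i ▸ lie_mem_eigenspace_ad (hv _) (hv _)
  have hurow (i : Fin 3) : ⁅v (i + 1), v (i + 2)⁆ ∈ pauliRow k E 2 :=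
    hE.lie_mem_pauliRow (by decide) (hrow _) (hrow _)
  have hle : pauliRow k E 1 ≤ Submodule.span k (Set.range v) := by
    rw [pauliRow, Submodule.span_le]
    rintro _ ⟨⟨_, j⟩, ⟨-, rfl⟩, rfl⟩
    exact hspan j
  have huu (i : Fin 3) : ∃ c : k, c • v i =
      ⁅⁅v (i + 1 + 1), v (i + 1 + 2)⁆, ⁅v (i + 2 + 1), v (i + 2 + 2)⁆⁆ := by
    refine Submodule.mem_span_singleton.1 (mem_span_singleton_of_mem_eigenspace hμ hv (hle ?_) ?_)
    · exact hE.lie_mem_pauliRow (by decide) (hurow _) (hurow _)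
    · have h := lie_mem_eigenspace_ad (hu (i + 1)) (hu (i + 2))
      rwa [← neg_add, hμsum, neg_neg] at h
  choose b hb using huu
  refine ⟨b, fun _ ↦ rfl, fun i ↦ (hb i).symm, fun i j hij ↦ ?_⟩
  have heig := End.mem_eigenspace_iff.1 (lie_mem_eigenspace_ad (hv i) (hu j))
  have hrow : ⁅v i, ⁅v (j + 1), v (j + 2)⁆⁆ ∈ pauliRow k E 0 :=
    hE.lie_mem_pauliRow (by decide) (hrow i) (hurow j)
  rw [ad_apply, hE.lie_eq_zero_of_mem_pauliRow_zero hθ hrow, eq_comm] at heig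
  refine (smul_eq_zero.1 heig).resolve_left fun h ↦ hij (hμ ?_)
  linear_combination h

lemma exists_smul_ne_zero (hE : IsPauliBasis k E) {b : Fin 3 → k} {v u : Fin 3 → K}
    (F : IsSl3Frame b v u) (hspan : ∀ j, E (1, j) ∈ Submodule.span k (Set.range v)) :
    ∃ l, b l • v l ≠ 0 := by
  by_contra! hb
  have of_lie {x y z : K} {c : k} (hc : c ≠ 0) (h : ⁅x, y⁆ = c • z)
      (hx : x ∈ Submodule.span k (Set.range v)) (hy : y ∈ Submodule.span k (Set.range v)) :
      z ∈ Submodule.span k (Set.range u) := by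
    rw [← Submodule.smul_mem_iff _ hc, ← h]
    obtain ⟨a, rfl⟩ := (Submodule.mem_span_range_iff_exists_fun k).1 hx
    obtain ⟨a', rfl⟩ := (Submodule.mem_span_range_iff_exists_fun k).1 hy
    rw [F.lie_sum_v_sum_v]
    exact sum_mem fun i _ ↦ Submodule.smul_mem _ _ (Submodule.subset_span ⟨i, rfl⟩)
  obtain ⟨c₁, hc₁, h₁⟩ := hE.exists_lie_eq_smul (1, 0) (1, 1) (by decide)
  obtain ⟨c₂, hc₂, h₂⟩ := hE.exists_lie_eq_smul (1, 0) (1, 2) (by decide)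
  obtain ⟨c, hc, h⟩ := hE.exists_lie_eq_smul ((1, 0) + (1, 1)) ((1, 0) + (1, 2)) (by decide)
  obtain ⟨a, ha⟩ := (Submodule.mem_span_range_iff_exists_fun k).1
    (of_lie hc₁ h₁ (hspan 0) (hspan 1))
  obtain ⟨a', ha'⟩ := (Submodule.mem_span_range_iff_exists_fun k).1
    (of_lie hc₂ h₂ (hspan 0) (hspan 2))
  rw [← ha, ← ha', F.lie_sum_u_sum_u] at h
  simp only [mul_smul, hb, smul_zero, Finset.sum_const_zero] at h
  exact smul_ne_zero hc (hE.ne_zero (by decide)) h.symm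

theorem exists_isSl3Frame [IsAlgClosed k] [NeZero (3 : k)] (hE : IsPauliBasis k E) :
    ∃ (b : Fin 3 → k) (v u : Fin 3 → K), IsSl3Frame b v u ∧ (∃ l, b l • v l ≠ 0) ∧
      ∀ j, E (1, j) ∈ Submodule.span k (Set.range v) := by
  obtain ⟨θ, hθ, hcyclic, ⟨c, hc⟩, ⟨d, hd⟩⟩ := hE.exists_cyclic_generator
  have : NeZero ((3 : ℕ) : k) := ⟨by simpa using NeZero.ne (3 : k)⟩
  obtain ⟨ω, hω⟩ := HasEnoughRootsOfUnity.exists_primitiveRoot k 3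
  set v : Fin 3 → K := fun i ↦ cubicEigenvector (ad k K θ) (E (1, 0)) (ω ^ (i : ℕ))
  have hv (i : Fin 3) : v i ∈ (ad k K θ).eigenspace (ω ^ (i : ℕ)) :=
    cubicEigenvector_mem_eigenspace hcyclic
      (by rw [← pow_mul, mul_comm, pow_mul, hω.pow_eq_one, one_pow])
  have hrow₁ : E (1, 0) ∈ pauliRow k E 1 := mem_pauliRow (by decide) rfl
  have hlie {x : K} (hx : x ∈ pauliRow k E 1) : ⁅θ, x⁆ ∈ pauliRow k E 1 :=
    hE.lie_mem_pauliRow (by decide) hθ hx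
  have hrow (i : Fin 3) : v i ∈ pauliRow k E 1 :=
    add_mem (add_mem (Submodule.smul_mem _ _ hrow₁) (Submodule.smul_mem _ _ (hlie hrow₁)))
      (hlie (hlie hrow₁))
  have hspan : ∀ j, E (1, j) ∈ Submodule.span k (Set.range v) := by
    have h0 := mem_span_range_cubicEigenvector hω (ad k K θ) (E (1, 0))
    have h1 := map_mem_span_of_mem_eigenspace hv h0
    have h2 := map_mem_span_of_mem_eigenspace hv h1
    intro j
    fin_cases j
    · exact h0
    · exact hc ▸ Submodule.smul_mem _ c h1
    · exact hd ▸ Submodule.smul_mem _ d h2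
  obtain ⟨b, F⟩ := hE.isSl3Frame_of_eigenvectors hθ (μ := fun i ↦ ω ^ (i : ℕ))
    (fun i j h ↦ Fin.ext (hω.pow_inj i.2 j.2 h))
    (by simpa [Finset.sum_range_succ, Fin.sum_univ_three] using hω.geom_sum_eq_zero (by norm_num))
    hv hrow hspan
  exact ⟨b, v, _, F, hE.exists_smul_ne_zero F hspan, hspan⟩

theorem nonempty_lieEquiv_sl [IsAlgClosed k] [NeZero (3 : k)] (hE : IsPauliBasis k E) :
    Nonempty (K ≃ₗ⁅k⁆ SpecialLinear.sl (Fin 3) k) := by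
  obtain ⟨b, v, u, F, ⟨l, hl⟩, hspan⟩ := hE.exists_isSl3Frame
  obtain ⟨t, ht, G⟩ := F.exists_normalized hl
  have hsurj : Function.Surjective G.toLieHom := by
    rw [← LieHom.range_eq_top]
    refine hE.lieSubalgebra_eq_top fun j ↦ ?_
    have hle : Submodule.span k (Set.range v) ≤ G.toLieHom.range.toSubmodule := by
      rw [Submodule.span_le]
      rintro _ ⟨i, rfl⟩
      exact (Submodule.smul_mem_iff _ ht).1 (G.v_mem_range_toLieHom i)
    exact hle (hspan j)
  have := FiniteDimensional.of_finrank_pos (K := k) (V := K) (by simp [hE.finrank_eq_eight])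
  have hfin : Module.finrank k (SpecialLinear.sl (Fin 3) k) = 8 :=
    Nat.succ_injective (finrank_sl_add_one k (Fin 3))
  have hinj : Function.Injective G.toLieHom :=
    (LinearMap.injective_iff_surjective_of_finrank_eq_finrank
      (f := (G.toLieHom : SpecialLinear.sl (Fin 3) k →ₗ[k] K))
      (hfin.trans hE.finrank_eq_eight.symm)).2 hsurj
  exact ⟨(LieEquiv.ofBijective G.toLieHom ⟨hinj, hsurj⟩).symm⟩

end IsPauliBasis

end PauliBasis

section EisensteinLattice

/-- The lattice `ℤ[ω]²` for a primitive cube root of unity `ω`, where `(a, b, c, d)` stands for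
`(a + b * ω, c + d * ω)`. -/
abbrev EisensteinLattice : Type := ℤ × ℤ × ℤ × ℤ

/-- Multiplication by `ω` on `ℤ[ω]²`. -/
def mulOmega (x : EisensteinLattice) : EisensteinLattice :=
  (-x.2.1, x.1 - x.2.1, -x.2.2.2, x.2.2.1 - x.2.2.2)

/-- Representatives of the roots of `D₄ ⊆ ℤ[ω]²` up to multiplication by units of `ℤ[ω]`. -/
def d4Representatives : Finset EisensteinLattice :=
  {(1, 0, 0, 0), (0, 0, 1, 0), (1, 0, 1, 0), (0, -1, 1, 0)}

/-- The root system of type `D₄` in `ℤ[ω]²` on which `ω` acts as a fixed-point-free isometry. -/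
def d4Roots : Finset EisensteinLattice :=
  d4Representatives.biUnion fun x ↦ {x, mulOmega x, mulOmega (mulOmega x), -x, -mulOmega x,
    -mulOmega (mulOmega x)}

/-- Reduction modulo `1 - ω`, whose residue field has three elements. -/
def reduction (x : EisensteinLattice) : ZMod 3 × ZMod 3 :=
  (((x.1 + x.2.1 : ℤ) : ZMod 3), ((x.2.2.1 + x.2.2.2 : ℤ) : ZMod 3))

lemma reduction_add (x y : EisensteinLattice) : reduction (x + y) = reduction x + reduction y := by
  simp only [reduction, Prod.fst_add, Prod.snd_add, Prod.mk_add_mk]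
  push_cast
  ext <;> ring

lemma reduction_mulOmega (x : EisensteinLattice) : reduction (mulOmega x) = reduction x := by
  have h3 : (3 : ZMod 3) = 0 := rfl
  simp only [reduction, mulOmega]
  push_cast
  ext
  · linear_combination -(x.2.1 : ZMod 3) * h3
  · linear_combination -(x.2.2.2 : ZMod 3) * h3

lemma reduction_iterate_mulOmega (i : ℕ) (x : EisensteinLattice) :
    reduction (mulOmega^[i] x) = reduction x :=
  congrFun
    (Function.iterate_invariant (f := mulOmega) (g := reduction) (funext reduction_mulOmega) i) x

lemma card_d4Roots : d4Roots.card = 24 := by decide +kernel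

lemma reduction_ne_zero : ∀ x ∈ d4Roots, reduction x ≠ 0 := by decide +kernel

lemma iterate_mulOmega_mem_d4Roots : ∀ x ∈ d4Roots, ∀ i : Fin 3, mulOmega^[i] x ∈ d4Roots := by
  decide +kernel

lemma iterate_mulOmega_inj :
    ∀ x ∈ d4Roots, ∀ i j : Fin 3, mulOmega^[i] x = mulOmega^[j] x → i = j := by
  decide +kernel

lemma exists_iterate_mulOmega_eq :
    ∀ x ∈ d4Roots, ∀ y ∈ d4Roots, reduction x = reduction y → ∃ i : Fin 3, mulOmega^[i] x = y := by
  decide +kernel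

lemma exists_mem_d4Roots_reduction_eq : ∀ p ≠ 0, ∃ x ∈ d4Roots, reduction x = p := by
  decide +kernel

lemma add_iterate_mulOmega_notMem_d4Roots : ∀ x ∈ d4Roots, ∀ y ∈ d4Roots,
    reduction x ≠ reduction y → symplecticForm (reduction x) (reduction y) = 0 →
      ∀ i : Fin 3, x + mulOmega^[i] y ∉ d4Roots := by
  decide +kernel

lemma exists_add_iterate_mulOmega_mem_d4Roots : ∀ x ∈ d4Roots, ∀ y ∈ d4Roots,
    symplecticForm (reduction x) (reduction y) ≠ 0 → ∃ i : Fin 3,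
      x + mulOmega^[i] y ∈ d4Roots ∧ ∀ j : Fin 3, j ≠ i → x + mulOmega^[j] y ∉ d4Roots := by
  decide +kernel

lemma ne_and_sub_notMem_of_add_mem_d4Roots :
    ∀ x ∈ d4Roots, ∀ y ∈ d4Roots, x + y ∈ d4Roots → y ≠ x ∧ y - x ∉ d4Roots := by
  decide +kernel

end EisensteinLattice

section OrbitSum

variable {R L : Type*} [CommRing R] [LieRing L] [LieAlgebra R L]

/-- The subalgebra of fixed points of an endomorphism of a Lie algebra. -/
def fixedSubalgebra (f : L →ₗ⁅R⁆ L) : LieSubalgebra R L where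
  __ := LinearMap.eqLocus (f : L →ₗ[R] L) LinearMap.id
  lie_mem' {x y} hx hy := (f.map_lie x y).trans (congrArg₂ _ hx hy)

/-- For an automorphism `f` of order three, the sum `x + f x + f (f x)` as a fixed point. -/
def orbitSum (f : L →ₗ⁅R⁆ L) (hf : ∀ x, f (f (f x)) = x) : L →ₗ[R] fixedSubalgebra f :=
  LinearMap.codRestrict (fixedSubalgebra f).toSubmodule
    (LinearMap.id + (f : L →ₗ[R] L) + (f : L →ₗ[R] L) ∘ₗ (f : L →ₗ[R] L)) fun x ↦ by
      change f (x + f x + f (f x)) = x + f x + f (f x)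
      rw [map_add, map_add, hf]
      abel

variable {f : L →ₗ⁅R⁆ L} (hf : ∀ x, f (f (f x)) = x)

lemma coe_orbitSum (x : L) : (orbitSum f hf x : L) = x + f x + f (f x) := rfl

lemma coe_orbitSum_eq_sum (x : L) : (orbitSum f hf x : L) = ∑ i : Fin 3, f^[i] x := by
  rw [coe_orbitSum, Fin.sum_univ_three]
  rfl

lemma orbitSum_iterate (i : ℕ) (x : L) : orbitSum f hf (f^[i] x) = orbitSum f hf x := by
  refine congrFun (Function.iterate_invariant (funext fun y ↦ Subtype.ext ?_) i) x
  simp only [Function.comp_apply, coe_orbitSum, hf]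
  abel

lemma orbitSum_coe (x : fixedSubalgebra f) : orbitSum f hf x = (3 : R) • x := by
  have hx : f x = x := x.2
  refine Subtype.ext ?_
  rw [coe_orbitSum, hx, hx]
  change (x + x + x : L) = (3 : R) • (x : L)
  module

lemma lie_orbitSum_orbitSum (x y : L) :
    ⁅orbitSum f hf x, orbitSum f hf y⁆ = ∑ i : Fin 3, orbitSum f hf ⁅x, f^[i] y⁆ := by
  refine Subtype.ext ?_
  simp only [Fin.sum_univ_three, LieSubalgebra.coe_bracket, AddMemClass.coe_add, coe_orbitSum,
    LieHom.map_lie, add_lie, lie_add, Fin.coe_ofNat_eq_mod, Nat.reduceMod, Function.iterate_zero,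
    Function.iterate_succ, Function.comp_apply, id_eq, hf]
  abel

end OrbitSum

section D4Grading

open Module

/-- A grading of a Lie algebra by the root lattice of type `D₄` with the properties of a root space
decomposition. -/
structure IsD4Grading {k L : Type*} [Field k] [LieRing L] [LieAlgebra k L]
    (W : EisensteinLattice → Submodule k L) : Prop where
  iSupIndep : iSupIndep W
  iSup_eq_top : ⨆ x, W x = ⊤
  eq_bot : ∀ x, x ≠ 0 → x ∉ d4Roots → W x = ⊥
  finrank_eq_one : ∀ x ∈ d4Roots, finrank k (W x) = 1
  lie_mem : ∀ {x y u v}, u ∈ W x → v ∈ W y → ⁅u, v⁆ ∈ W (x + y)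
  lie_ne_zero : ∀ {x y u v}, x ∈ d4Roots → y ∈ d4Roots → x + y ∈ d4Roots →
    u ∈ W x → v ∈ W y → u ≠ 0 → v ≠ 0 → ⁅u, v⁆ ≠ 0

/-- An automorphism of order three permuting the pieces of a `D₄`-grading by multiplication by `ω`,
without nonzero fixed points in degree zero. -/
structure IsD4Rotation {k L : Type*} [Field k] [LieRing L] [LieAlgebra k L]
    (W : EisensteinLattice → Submodule k L) (f : L →ₗ⁅k⁆ L) : Prop extends IsD4Grading W where
  map_map_map : ∀ u, f (f (f u)) = u
  map_mem : ∀ {x u}, u ∈ W x → f u ∈ W (mulOmega x)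
  eq_zero_of_map_eq : ∀ u ∈ W 0, f u = u → u = 0

/-- A choice of a root `ρ p` over every nonzero residue `p` modulo `1 - ω` and of a root vector
`e p` for it. -/
structure IsRootSection {k L : Type*} [Field k] [LieRing L] [LieAlgebra k L]
    (W : EisensteinLattice → Submodule k L) (ρ : ZMod 3 × ZMod 3 → EisensteinLattice)
    (e : ZMod 3 × ZMod 3 → L) : Prop where
  mem_d4Roots : ∀ p ≠ 0, ρ p ∈ d4Roots
  reduction_eq : ∀ p ≠ 0, reduction (ρ p) = p
  mem : ∀ p ≠ 0, e p ∈ W (ρ p)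
  ne_zero : ∀ p ≠ 0, e p ≠ 0

lemma linearIndependent_sum_prod {R M ι κ : Type*} [Ring R] [AddCommGroup M] [Module R M]
    [Fintype κ] [Nonempty κ] {v : ι × κ → M} (hv : LinearIndependent R v) :
    LinearIndependent R fun i ↦ ∑ j, v (i, j) := by
  rw [linearIndependent_iff'] at hv ⊢
  intro s g hg i hi
  refine hv (s ×ˢ Finset.univ) (fun p ↦ g p.1) ?_ (i, Classical.arbitrary κ) (by simp [hi])
  simpa only [Finset.sum_product, ← Finset.smul_sum] using hg

variable {k L : Type*} [Field k] [LieRing L] [LieAlgebra k L]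
  {W : EisensteinLattice → Submodule k L}

lemma IsD4Grading.exists_isRootSection (G : IsD4Grading W) : ∃ ρ e, IsRootSection W ρ e := by
  have hp (p : ZMod 3 × ZMod 3) :
      ∃ x u, p ≠ 0 → x ∈ d4Roots ∧ reduction x = p ∧ u ∈ W x ∧ u ≠ 0 := by
    by_cases hp : p = 0
    · exact ⟨0, 0, fun h ↦ (h hp).elim⟩
    · obtain ⟨x, hx, hxp⟩ := exists_mem_d4Roots_reduction_eq p hp
      have hW : W x ≠ ⊥ := by
        intro h
        have h1 := G.finrank_eq_one x hx
        rw [h, finrank_bot] at h1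
        exact zero_ne_one h1
      obtain ⟨u, hu, hu0⟩ := Submodule.exists_mem_ne_zero_of_ne_bot hW
      exact ⟨x, u, fun _ ↦ ⟨hx, hxp, hu, hu0⟩⟩
  choose ρ e h using hp
  exact ⟨ρ, e, fun p hp ↦ (h p hp).1, fun p hp ↦ (h p hp).2.1, fun p hp ↦ (h p hp).2.2.1,
    fun p hp ↦ (h p hp).2.2.2⟩

namespace IsD4Rotation

variable {f : L →ₗ⁅k⁆ L} {ρ : ZMod 3 × ZMod 3 → EisensteinLattice} {e : ZMod 3 × ZMod 3 → L}

lemma iterate_mem (G : IsD4Rotation W f) (i : ℕ) {x : EisensteinLattice} {u : L} (hu : u ∈ W x) :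
    f^[i] u ∈ W (mulOmega^[i] x) := by
  induction i with
  | zero => exact hu
  | succ i ih =>
    rw [Function.iterate_succ_apply', Function.iterate_succ_apply']
    exact G.map_mem ih

lemma iterate_ne_zero (G : IsD4Rotation W f) (i : ℕ) {u : L} (hu : u ≠ 0) : f^[i] u ≠ 0 := by
  have hinj : Function.Injective f :=
    Function.LeftInverse.injective (g := fun u ↦ f (f u)) G.map_map_map
  rw [← iterate_map_zero f i]
  exact (hinj.iterate i).ne hu

lemma orbitSum_eq_zero (G : IsD4Rotation W f) {x : EisensteinLattice} (hx : x ∉ d4Roots) {u : L}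
    (hu : u ∈ W x) : orbitSum f G.map_map_map u = 0 := by
  obtain rfl | hx0 := eq_or_ne x 0
  · have hmem {v : L} (hv : v ∈ W 0) : f v ∈ W 0 := G.map_mem hv
    exact Subtype.ext (G.eq_zero_of_map_eq _ (add_mem (add_mem hu (hmem hu)) (hmem (hmem hu)))
      (orbitSum f G.map_map_map u).2)
  · rw [G.eq_bot x hx0 hx, Submodule.mem_bot] at hu
    rw [hu, map_zero]

lemma exists_orbitSum_eq_smul (G : IsD4Rotation W f) (S : IsRootSection W ρ e)
    {x : EisensteinLattice} (hx : x ∈ d4Roots) {u : L} (hu : u ∈ W x) :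
    ∃ c : k, (u ≠ 0 → c ≠ 0) ∧
      orbitSum f G.map_map_map u = c • orbitSum f G.map_map_map (e (reduction x)) := by
  have hx0 := reduction_ne_zero x hx
  obtain ⟨i, hi⟩ := exists_iterate_mulOmega_eq _ (S.mem_d4Roots _ hx0) x hx (S.reduction_eq _ hx0)
  obtain ⟨c, hc⟩ := exists_smul_eq_of_finrank_eq_one (G.finrank_eq_one x hx)
    (x := ⟨_, hi ▸ G.iterate_mem i (S.mem _ hx0)⟩)
    (by simpa using G.iterate_ne_zero i (S.ne_zero _ hx0)) ⟨u, hu⟩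
  have hcu : c • f^[i] (e (reduction x)) = u := congrArg Subtype.val hc
  refine ⟨c, ?_, ?_⟩
  · rintro hu0 rfl
    exact hu0 (by rw [← hcu, zero_smul])
  · rw [← hcu, map_smul, orbitSum_iterate]

lemma linearIndependent_orbitSum (G : IsD4Rotation W f) (S : IsRootSection W ρ e) :
    LinearIndependent k
      fun p : {p : ZMod 3 × ZMod 3 // p ≠ 0} ↦ orbitSum f G.map_map_map (e p) := by
  have hinj : Function.Injective
      fun q : {p : ZMod 3 × ZMod 3 // p ≠ 0} × Fin 3 ↦ mulOmega^[q.2] (ρ q.1) := by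
    rintro ⟨p, i⟩ ⟨q, j⟩ h
    have hpq : p = q := Subtype.ext <| by
      simpa only [reduction_iterate_mulOmega, S.reduction_eq _ p.2, S.reduction_eq _ q.2] using
        congrArg reduction h
    subst hpq
    rw [iterate_mulOmega_inj _ (S.mem_d4Roots _ p.2) i j h]
  have hli : LinearIndependent k
      fun q : {p : ZMod 3 × ZMod 3 // p ≠ 0} × Fin 3 ↦ f^[q.2] (e q.1) :=
    (G.iSupIndep.comp hinj).linearIndependent _ (fun q ↦ G.iterate_mem _ (S.mem _ q.1.2))
      fun q ↦ G.iterate_ne_zero _ (S.ne_zero _ q.1.2)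
  refine LinearIndependent.of_comp (fixedSubalgebra f).toSubmodule.subtype ?_
  have hsum : (fixedSubalgebra f).toSubmodule.subtype ∘
      (fun p : {p : ZMod 3 × ZMod 3 // p ≠ 0} ↦ orbitSum f G.map_map_map (e p)) =
      fun p : {p : ZMod 3 × ZMod 3 // p ≠ 0} ↦ ∑ i : Fin 3, f^[i] (e p) :=
    funext fun p ↦ coe_orbitSum_eq_sum G.map_map_map (e p)
  have hlisum := linearIndependent_sum_prod hli
  rwa [hsum]

lemma span_orbitSum_eq_top [NeZero (3 : k)] (G : IsD4Rotation W f) (S : IsRootSection W ρ e) :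
    Submodule.span k ((fun p ↦ orbitSum f G.map_map_map (e p)) '' {0}ᶜ) = ⊤ := by
  set N := Submodule.span k ((fun p ↦ orbitSum f G.map_map_map (e p)) '' {0}ᶜ)
  have htop : N.comap (orbitSum f G.map_map_map) = ⊤ := by
    rw [eq_top_iff, ← G.iSup_eq_top, iSup_le_iff]
    intro x u hu
    rw [Submodule.mem_comap]
    by_cases hx : x ∈ d4Roots
    · obtain ⟨c, -, hc⟩ := G.exists_orbitSum_eq_smul S hx hu
      rw [hc]
      exact N.smul_mem c (Submodule.subset_span ⟨_, reduction_ne_zero x hx, rfl⟩)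
    · rw [G.orbitSum_eq_zero hx hu]
      exact zero_mem N
  refine eq_top_iff.2 fun x _ ↦ ?_
  rw [← N.smul_mem_iff (NeZero.ne (3 : k)), ← orbitSum_coe G.map_map_map]
  exact htop.ge (Submodule.mem_top (x := (x : L)))

theorem isPauliBasis [NeZero (3 : k)] (G : IsD4Rotation W f) (S : IsRootSection W ρ e) :
    IsPauliBasis k fun p ↦ orbitSum f G.map_map_map (e p) where
  linearIndependent := G.linearIndependent_orbitSum S
  span_eq_top := G.span_orbitSum_eq_top S
  lie_eq_zero p q hp hq hpq := by
    obtain rfl | hne := eq_or_ne p q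
    · exact lie_self _
    have hnot := add_iterate_mulOmega_notMem_d4Roots _ (S.mem_d4Roots p hp) _ (S.mem_d4Roots q hq)
    rw [S.reduction_eq p hp, S.reduction_eq q hq] at hnot
    rw [lie_orbitSum_orbitSum]
    exact Finset.sum_eq_zero fun i _ ↦ G.orbitSum_eq_zero (hnot hne hpq i)
      (G.lie_mem (S.mem p hp) (G.iterate_mem i (S.mem q hq)))
  exists_lie_eq_smul p q hpq := by
    have hp : p ≠ 0 := by rintro rfl; simp [symplecticForm] at hpq
    have hq : q ≠ 0 := by rintro rfl; simp [symplecticForm] at hpq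
    have hex := exists_add_iterate_mulOmega_mem_d4Roots _ (S.mem_d4Roots p hp) _
      (S.mem_d4Roots q hq)
    rw [S.reduction_eq p hp, S.reduction_eq q hq] at hex
    obtain ⟨i, hi, hnot⟩ := hex hpq
    have hmem (j : Fin 3) := G.lie_mem (S.mem p hp) (G.iterate_mem j (S.mem q hq))
    obtain ⟨c, hc, h⟩ := G.exists_orbitSum_eq_smul S hi (hmem i)
    refine ⟨c, hc ?_, ?_⟩
    · exact G.lie_ne_zero (S.mem_d4Roots p hp)
        (iterate_mulOmega_mem_d4Roots _ (S.mem_d4Roots q hq) i) hi (S.mem p hp)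
        (G.iterate_mem i (S.mem q hq)) (S.ne_zero p hp) (G.iterate_ne_zero i (S.ne_zero q hq))
    · rw [reduction_add, reduction_iterate_mulOmega, S.reduction_eq p hp, S.reduction_eq q hq] at h
      rw [lie_orbitSum_orbitSum, Finset.sum_eq_single i _ (by simp), h]
      exact fun j _ hj ↦ G.orbitSum_eq_zero (hnot j hj) (hmem j)

end IsD4Rotation

end D4Grading

section EisensteinAction

variable {k V : Type*} [Field k] [AddCommGroup V] [Module k V] {φ : V →ₗ[k] V}

lemma map_map_eq_neg_sub (hφ : ∀ v, v + φ v + φ (φ v) = 0) (v : V) : φ (φ v) = -v - φ v := by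
  rw [← sub_eq_zero, ← hφ v]
  abel

/-- The additive map `ℤ[ω]² → V` sending `(1, 0)` to `α` and `(0, 1)` to `β`, where `ω` acts on `V`
through `φ`. -/
def eisensteinHom (φ : V →ₗ[k] V) (α β : V) : EisensteinLattice →+ V :=
  AddMonoidHom.mk' (fun x ↦ x.1 • α + x.2.1 • φ α + (x.2.2.1 • β + x.2.2.2 • φ β)) fun x y ↦ by
    simp only [Prod.fst_add, Prod.snd_add]
    module

lemma eisensteinHom_apply (α β : V) (x : EisensteinLattice) : eisensteinHom φ α β x =
    x.1 • α + x.2.1 • φ α + (x.2.2.1 • β + x.2.2.2 • φ β) := rfl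

lemma eisensteinHom_mulOmega (hφ : ∀ v, v + φ v + φ (φ v) = 0) (α β : V) (x : EisensteinLattice) :
    eisensteinHom φ α β (mulOmega x) = φ (eisensteinHom φ α β x) := by
  simp only [eisensteinHom_apply, mulOmega, map_add, map_zsmul, map_map_eq_neg_sub hφ]
  module

-- The norm `z ^ 2 - z * w + w ^ 2` of `z + w * ω` is positive unless `z = w = 0`.
lemma eq_zero_of_zsmul_add_zsmul_mem [CharZero k] (hφ : ∀ v, v + φ v + φ (φ v) = 0)
    {q : Submodule k V} (hq : ∀ v ∈ q, φ v ∈ q) {b : V} (hb : b ∉ q) {z w : ℤ}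
    (h : z • b + w • φ b ∈ q) : z = 0 ∧ w = 0 := by
  have hnorm : (z * z - z * w + w * w) • b ∈ q := by
    have hmem := sub_mem (zsmul_mem h (z - w)) (zsmul_mem (hq _ h) w)
    simp only [map_add, map_zsmul, map_map_eq_neg_sub hφ] at hmem
    convert hmem using 1
    module
  have hzero : z * z - z * w + w * w = 0 := by
    by_contra hne
    rw [← Int.cast_smul_eq_zsmul k, q.smul_mem_iff (Int.cast_ne_zero.2 hne)] at hnorm
    exact hb hnorm
  constructor <;> nlinarith [sq_nonneg (z - w), sq_nonneg z, sq_nonneg w, sq_nonneg (z + w)]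

lemma eisensteinHom_injective [CharZero k] (hφ : ∀ v, v + φ v + φ (φ v) = 0)
    {q : Submodule k V} (hq : ∀ v ∈ q, φ v ∈ q) {α β : V} (hα0 : α ≠ 0) (hα : α ∈ q)
    (hβ : β ∉ q) : Function.Injective (eisensteinHom φ α β) := by
  refine (injective_iff_map_eq_zero _).2 ?_
  rintro ⟨x₁, x₂, x₃, x₄⟩ hx
  rw [eisensteinHom_apply] at hx
  dsimp only at hx
  have hβmem : x₃ • β + x₄ • φ β ∈ q := by
    rw [eq_neg_of_add_eq_zero_right hx]
    exact neg_mem (add_mem (zsmul_mem hα _) (zsmul_mem (hq _ hα) _))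
  obtain ⟨rfl, rfl⟩ := eq_zero_of_zsmul_add_zsmul_mem hφ hq hβ hβmem
  have hαmem : x₁ • α + x₂ • φ α ∈ (⊥ : Submodule k V) := by simpa using hx
  obtain ⟨rfl, rfl⟩ := eq_zero_of_zsmul_add_zsmul_mem hφ (q := ⊥) (by simp) (by simpa) hαmem
  rfl

lemma map_mem_of_mem_d4Roots {Φ : Set V} (hneg : ∀ v ∈ Φ, -v ∈ Φ) (hΦ : ∀ v ∈ Φ, φ v ∈ Φ)
    {r : EisensteinLattice →+ V} (hr : ∀ x, r (mulOmega x) = φ (r x))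
    (hrep : ∀ x ∈ d4Representatives, r x ∈ Φ) : ∀ x ∈ d4Roots, r x ∈ Φ := by
  intro x hx
  simp only [d4Roots, Finset.mem_biUnion, Finset.mem_insert, Finset.mem_singleton] at hx
  obtain ⟨y, hy, hxy⟩ := hx
  have h₀ := hrep y hy
  have h₁ := hΦ _ h₀
  have h₂ := hΦ _ h₁
  rcases hxy with rfl | rfl | rfl | rfl | rfl | rfl <;> simp [hr, hneg, h₀, h₁, h₂]

end EisensteinAction

section RootSystem

open Module

variable {ι k M N : Type*} [Field k] [AddCommGroup M] [Module k M] [AddCommGroup N] [Module k N]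
  (P : RootPairing ι k M N)

lemma exists_root_notMem_and_coroot'_ne_zero [P.IsIrreducible] {q : Submodule k M}
    (hbot : q ≠ ⊥) (htop : q ≠ ⊤) : ∃ i, P.root i ∉ q ∧ ∃ v ∈ q, P.coroot' i v ≠ 0 := by
  have hinvt : ¬ ∀ i, q ∈ End.invtSubmodule (P.reflection i : M →ₗ[k] M) := fun h ↦
    htop (RootPairing.IsIrreducible.eq_top_of_invtSubmodule_reflection q h hbot)
  simp only [End.mem_invtSubmodule_iff_forall_mem_of_mem, not_forall] at hinvt
  obtain ⟨i, v, hv, hiv⟩ := hinvt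
  have hsub : v - P.coroot' i v • P.root i ∉ q := hiv
  rw [q.sub_mem_iff_right hv] at hsub
  refine ⟨i, fun hi ↦ hsub (q.smul_mem _ hi), v, hv, fun h0 ↦ hsub ?_⟩
  rw [h0, zero_smul]
  exact zero_mem q

lemma mul_neg_of_add_add_eq_zero {R : Type*} [CommRing R] [LinearOrder R] [IsStrictOrderedRing R]
    {a b c : R} (h : a + b + c = 0) (hab : a ≠ 0 ∨ b ≠ 0) : a * b < 0 ∨ b * c < 0 ∨ c * a < 0 := by
  have hsq : a ^ 2 + b ^ 2 + c ^ 2 = -2 * (a * b + b * c + c * a) := by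
    linear_combination (a + b + c) * h
  by_contra! hnonneg
  rcases hab with h0 | h0 <;>
    nlinarith [sq_pos_of_ne_zero h0, sq_nonneg a, sq_nonneg b, sq_nonneg c]

section Crystallographic

variable [P.IsCrystallographic]

lemma coroot'_root_eq_pairingIn (i j : ι) : P.coroot' i (P.root j) = P.pairingIn ℤ j i := by
  rw [RootPairing.root_coroot'_eq_pairing, ← P.algebraMap_pairingIn ℤ j i]
  rfl

variable [CharZero k] {φ : M →ₗ[k] M} {σ : ι → ι}

lemma sum_pairingIn_orbit_eq_zero (hφ : ∀ v, v + φ v + φ (φ v) = 0)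
    (hσ : ∀ j, P.root (σ j) = φ (P.root j)) (i j : ι) :
    P.pairingIn ℤ j i + P.pairingIn ℤ (σ j) i + P.pairingIn ℤ (σ (σ j)) i = 0 := by
  have h := congrArg (P.coroot' i) (hφ (P.root j))
  rw [← hσ, ← hσ, map_add, map_add, map_zero] at h
  simp only [coroot'_root_eq_pairingIn] at h
  exact_mod_cast h

lemma exists_pairingIn_mul_pairingIn_neg (hφ : ∀ v, v + φ v + φ (φ v) = 0)
    (hσ : ∀ j, P.root (σ j) = φ (P.root j)) {i j : ι} {v : M}
    (hv : v ∈ Submodule.span k {P.root j, φ (P.root j)}) (hiv : P.coroot' i v ≠ 0) :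
    ∃ l ∈ ({j, σ j, σ (σ j)} : Set ι), P.pairingIn ℤ l i * P.pairingIn ℤ (σ l) i < 0 := by
  have hsum := sum_pairingIn_orbit_eq_zero P hφ hσ i j
  have hσσσ : σ (σ (σ j)) = j := P.root.injective <| by
    simp only [hσ, map_map_eq_neg_sub hφ, map_sub, map_neg]
    abel
  have hne : P.pairingIn ℤ j i ≠ 0 ∨ P.pairingIn ℤ (σ j) i ≠ 0 := by
    by_contra! h
    obtain ⟨s, t, rfl⟩ := Submodule.mem_span_pair.1 hv
    refine hiv ?_
    rw [← hσ, map_add, map_smul, map_smul, coroot'_root_eq_pairingIn, coroot'_root_eq_pairingIn,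
      h.1, h.2, Int.cast_zero, smul_zero, smul_zero, add_zero]
  rcases mul_neg_of_add_add_eq_zero hsum hne with h | h | h
  · exact ⟨j, by simp, h⟩
  · exact ⟨σ j, by simp, h⟩
  · exact ⟨σ (σ j), by simp, by rwa [hσσσ]⟩

variable [Finite ι]

lemma exists_root_add_mem_and_sub_map_mem (hσ : ∀ j, P.root (σ j) = φ (P.root j))
    {q : Submodule k M} (hq : ∀ v ∈ q, φ v ∈ q) {i l : ι} (hi : P.root i ∉ q) (hl : P.root l ∈ q)
    (hneg : P.pairingIn ℤ l i * P.pairingIn ℤ (σ l) i < 0) :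
    ∃ β ∈ Set.range P.root, β ∉ q ∧ P.root l + β ∈ Set.range P.root ∧
      β - φ (P.root l) ∈ Set.range P.root := by
  have hσl : P.root (σ l) ∈ q := hσ l ▸ hq _ hl
  have hne {m : ι} (hm : P.root m ∈ q) : m ≠ i ∧ P.root m ≠ -P.root i := by
    refine ⟨fun h ↦ hi (h ▸ hm), fun h ↦ hi ?_⟩
    rwa [h, neg_mem_iff] at hm
  rw [← hσ]
  rcases mul_neg_iff.1 hneg with ⟨hpos, hneg⟩ | ⟨hneg, hpos⟩
  · refine ⟨-P.root i, P.neg_root_mem i, by rwa [neg_mem_iff], ?_, ?_⟩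
    · rw [← sub_eq_add_neg]
      exact P.root_sub_root_mem_of_pairingIn_pos hpos (hne hl).1
    · rw [← P.neg_mem_range_root_iff, neg_sub, sub_neg_eq_add]
      exact P.root_add_root_mem_of_pairingIn_neg hneg (hne hσl).2
  · refine ⟨P.root i, ⟨i, rfl⟩, hi, P.root_add_root_mem_of_pairingIn_neg hneg (hne hl).2, ?_⟩
    rw [← P.neg_mem_range_root_iff, neg_sub]
    exact P.root_sub_root_mem_of_pairingIn_pos hpos (hne hσl).1

theorem exists_invariant_submodule_and_roots [P.IsIrreducible] (hM : 2 < finrank k M)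
    (hφ : ∀ v, v + φ v + φ (φ v) = 0) (hσ : ∀ j, P.root (σ j) = φ (P.root j)) [Nonempty ι] :
    ∃ (q : Submodule k M) (l : ι), (∀ v ∈ q, φ v ∈ q) ∧ P.root l ∈ q ∧
      ∃ β ∈ Set.range P.root, β ∉ q ∧ P.root l + β ∈ Set.range P.root ∧
        β - φ (P.root l) ∈ Set.range P.root := by
  obtain ⟨j⟩ := ‹Nonempty ι›
  set q := Submodule.span k {P.root j, φ (P.root j)} with hqdef
  have hj : P.root j ∈ q := Submodule.mem_span_of_mem (by simp)
  have hφj : φ (P.root j) ∈ q := Submodule.mem_span_of_mem (by simp)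
  have hq : ∀ v ∈ q, φ v ∈ q := by
    intro v hv
    obtain ⟨s, t, rfl⟩ := Submodule.mem_span_pair.1 hv
    rw [map_add, map_smul, map_smul, map_map_eq_neg_sub hφ]
    exact add_mem (q.smul_mem s hφj) (q.smul_mem t (sub_mem (neg_mem hj) hφj))
  have hbot : q ≠ ⊥ := fun h ↦ P.ne_zero j ((Submodule.mem_bot k).1 (h ▸ hj))
  have htop : q ≠ ⊤ := by
    intro h
    classical
    have hle := finrank_span_finset_le_card (R := k) {P.root j, φ (P.root j)}
    rw [Finset.coe_pair, Set.finrank, ← hqdef, h, finrank_top] at hle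
    exact absurd (hle.trans Finset.card_le_two) hM.not_ge
  obtain ⟨i, hi, v, hv, hiv⟩ := exists_root_notMem_and_coroot'_ne_zero P hbot htop
  obtain ⟨l, hl, hneg⟩ := exists_pairingIn_mul_pairingIn_neg P hφ hσ hv hiv
  have hlq : P.root l ∈ q := by
    obtain rfl | rfl | rfl := hl
    · exact hj
    · exact hσ j ▸ hφj
    · rw [hσ, hσ]
      exact hq _ hφj
  exact ⟨q, l, hq, hlq, exists_root_add_mem_and_sub_map_mem P hσ hq hi hlq hneg⟩

theorem exists_eisensteinHom_image_d4Roots_eq [P.IsIrreducible] (hM : 2 < finrank k M)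
    (hι : Nat.card ι = 24) (hφ : ∀ v, v + φ v + φ (φ v) = 0)
    (hφP : ∀ v ∈ Set.range P.root, φ v ∈ Set.range P.root) :
    ∃ r : EisensteinLattice →+ M, Function.Injective r ∧ (∀ x, r (mulOmega x) = φ (r x)) ∧
      r '' d4Roots = Set.range P.root := by
  choose σ hσ using fun j ↦ hφP _ ⟨j, rfl⟩
  have : Nonempty ι := (Nat.card_pos_iff.1 (hι ▸ by norm_num)).1
  obtain ⟨q, l, hq, hl, β, hβ, hβq, hadd, hsub⟩ := exists_invariant_submodule_and_roots P hM hφ hσ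
  set r := eisensteinHom φ (P.root l) β
  have hinj : Function.Injective r := eisensteinHom_injective hφ hq (P.ne_zero l) hl hβq
  have hr (x) : r (mulOmega x) = φ (r x) := eisensteinHom_mulOmega hφ _ _ x
  have hrep : ∀ x ∈ d4Representatives, r x ∈ Set.range P.root := by
    simp only [d4Representatives, Finset.mem_insert, Finset.mem_singleton]
    rintro x (rfl | rfl | rfl | rfl)
    · simp [r, eisensteinHom_apply]
    · simpa [r, eisensteinHom_apply] using hβ
    · simpa [r, eisensteinHom_apply] using hadd
    · simpa [r, eisensteinHom_apply, sub_eq_neg_add] using hsub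
  have hsubset := map_mem_of_mem_d4Roots (fun v hv ↦ P.neg_mem_range_root_iff.2 hv) hφP hr hrep
  refine ⟨r, hinj, hr, Set.eq_of_subset_of_ncard_le (Set.image_subset_iff.2 hsubset) ?_
    (Set.finite_range _)⟩
  rw [Set.ncard_image_of_injective _ hinj, Set.ncard_coe_finset, card_d4Roots,
    ← Nat.card_coe_set_eq, Nat.card_range_of_injective P.root.injective, hι]

end Crystallographic

end RootSystem

section DualAction

open Module

variable {R L : Type*} [CommRing R] [LieRing L] [LieAlgebra R L] {H : LieSubalgebra R L}

/-- The action `l ↦ l ∘ f⁻¹` on the dual of `H` of an automorphism `f` of order three preserving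
`H`; the inverse of `f` is written as `f ∘ f`. -/
def dualAction (f : L →ₗ⁅R⁆ L) (hfH : ∀ x ∈ H, f x ∈ H) : Dual R H →ₗ[R] Dual R H :=
  ((f.comp f : L →ₗ[R] L).restrict (p := H.toSubmodule) (q := H.toSubmodule)
    fun x hx ↦ hfH (f x) (hfH x hx)).dualMap

variable {f : L →ₗ⁅R⁆ L} (hfH : ∀ x ∈ H, f x ∈ H)

lemma dualAction_apply (l : Dual R H) (h : H) :
    dualAction f hfH l h = l ⟨f (f h), hfH _ (hfH h h.2)⟩ :=
  rfl

lemma add_dualAction_add_dualAction (hf : ∀ x, f (f (f x)) = x)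
    (hfree : ∀ x ∈ H, f x = x → x = 0) (l : Dual R H) :
    l + dualAction f hfH l + dualAction f hfH (dualAction f hfH l) = 0 := by
  ext h
  have hsum : (h : L) + f h + f (f h) = 0 := by
    refine hfree _ (add_mem (add_mem h.2 (hfH _ h.2)) (hfH _ (hfH _ h.2))) ?_
    simp only [map_add, hf]
    abel
  simp only [LinearMap.add_apply, dualAction_apply, ← map_add, LinearMap.zero_apply, hf]
  rw [← map_zero l]
  congr 1
  ext
  simpa [add_right_comm] using hsum

end DualAction

section RootSpace

open Module LieAlgebra LieModule

variable {k L : Type*} [Field k] [CharZero k] [LieRing L] [LieAlgebra k L] [FiniteDimensional k L]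
  {H : LieSubalgebra k L}

variable (k L H) in
lemma iSup_rootSpace_eq_top [LieRing.IsNilpotent H] [LieModule.IsTriangularizable k H L] :
    ⨆ l : Dual k H, (rootSpace H l).toSubmodule = ⊤ := by
  rw [eq_top_iff, ← LieSubmodule.iSup_toSubmodule_eq_top.2 (iSup_genWeightSpace_eq_top' k H L)]
  exact iSup_le fun α ↦ le_iSup (fun l : Dual k H ↦ (rootSpace H l).toSubmodule) α.toLinear

variable [H.IsCartanSubalgebra] [LieModule.IsTriangularizable k H L] [IsKilling k L]

variable (H) in
theorem card_root_add_finrank_eq_finrank [Nontrivial L] :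
    Nat.card H.root + finrank k H = finrank k L := by
  classical
  have hint : DirectSum.IsInternal fun α : Weight k H L ↦ (rootSpace H α).toSubmodule :=
    (DirectSum.isInternal_submodule_iff_iSupIndep_and_iSup_eq_top _).2
      ⟨LieSubmodule.iSupIndep_toSubmodule.2 (iSupIndep_genWeightSpace' k H L),
        LieSubmodule.iSup_toSubmodule_eq_top.2 (iSup_genWeightSpace_eq_top' k H L)⟩
  have hroots : ∑ α ∈ H.root, finrank k (rootSpace H α).toSubmodule = Nat.card H.root := by
    rw [Nat.card_eq_fintype_card, Fintype.card_coe, Finset.card_eq_sum_ones]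
    exact Finset.sum_congr rfl fun α hα ↦ IsKilling.finrank_rootSpace_eq_one α (by simpa using hα)
  have hzero : finrank k (rootSpace H (0 : Weight k H L)).toSubmodule = finrank k H := by
    rw [FunLike.coe_zero, rootSpace_zero_eq]
    rfl
  have huniv : (Finset.univ : Finset (Weight k H L)) = insert 0 H.root := by
    ext α
    simp [← Weight.isZero_iff_eq_zero, em]
  rw [← (LinearEquiv.ofBijective (DirectSum.coeLinearMap _) hint).finrank_eq, finrank_directSum,
    huniv, Finset.sum_insert (by simp [Weight.isZero_zero]), hroots, hzero, add_comm]

lemma apply_coroot_ne_zero {α β : Weight k H L} (hα : α.IsNonZero)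
    (hadd : rootSpace H (α + β) ≠ ⊥) (hsub : rootSpace H (β - α) = ⊥) :
    β (IsKilling.coroot α) ≠ 0 := by
  have htop := (IsKilling.rootSpace_zsmul_add_ne_bot_iff α β hα 1).1 (by simpa using hadd)
  have hbot := (IsKilling.rootSpace_zsmul_add_ne_bot_iff α β hα (-1)).not.1
    (by simpa [neg_add_eq_sub] using hsub)
  rw [IsKilling.apply_coroot_eq_cast]
  norm_cast
  lia

lemma mem_range_root_iff {l : Dual k H} :
    l ∈ Set.range (IsKilling.rootSystem H).root ↔ l ≠ 0 ∧ rootSpace H l ≠ ⊥ := by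
  constructor
  · rintro ⟨α, rfl⟩
    exact ⟨(IsKilling.rootSystem H).ne_zero α, α.1.2⟩
  · rintro ⟨hl0, hl⟩
    have hnonzero : Weight.IsNonZero (⟨l, hl⟩ : Weight k H L) :=
      fun h ↦ hl0 (DFunLike.coe_injective h)
    exact ⟨⟨⟨l, hl⟩, by simpa using hnonzero⟩, LinearMap.ext fun h ↦ rfl⟩

lemma finrank_rootSpace_eq_one_of_mem_range_root {l : Dual k H}
    (hl : l ∈ Set.range (IsKilling.rootSystem H).root) : finrank k (rootSpace H l) = 1 := by
  obtain ⟨⟨α, hα⟩, rfl⟩ := hl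
  exact IsKilling.finrank_rootSpace_eq_one α (by simpa using hα)

lemma lie_ne_zero_of_mem_rootSpace {l m : Dual k H}
    (hl : l ∈ Set.range (IsKilling.rootSystem H).root)
    (hadd : l + m ∈ Set.range (IsKilling.rootSystem H).root) (hsub : rootSpace H ⇑(m - l) = ⊥)
    {x y : L} (hx : x ∈ rootSpace H l) (hy : y ∈ rootSpace H m) (hx0 : x ≠ 0) (hy0 : y ≠ 0) :
    ⁅x, y⁆ ≠ 0 := by
  obtain ⟨⟨α, hα⟩, rfl⟩ := hl
  have hα : α.IsNonZero := by simpa using hα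
  let β : Weight k H L := ⟨m, fun h ↦ hy0 (by simpa [h] using hy)⟩
  have hβ : β (IsKilling.coroot α) ≠ 0 :=
    apply_coroot_ne_zero hα (mem_range_root_iff.1 hadd).2 hsub
  obtain ⟨h, e, f, ht, he, hf⟩ := IsKilling.exists_isSl2Triple_of_weight_isNonZero hα
  obtain ⟨c, hc⟩ := exists_smul_eq_of_finrank_eq_one (IsKilling.finrank_rootSpace_eq_one α hα)
    (x := ⟨x, hx⟩) (fun h ↦ hx0 (congrArg Subtype.val h)) ⟨e, he⟩
  obtain rfl : c • x = e := congrArg Subtype.val hc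
  intro hxy
  have hfy : ⁅f, y⁆ = 0 := by
    have hfy := lie_mem_genWeightSpace_of_mem_genWeightSpace hf hy
    rw [neg_add_eq_sub] at hfy
    exact (LieSubmodule.mem_bot _).1 (hsub.le hfy)
  have hhy : ⁅h, y⁆ = 0 := by
    rw [← ht.lie_e_f, lie_lie, hfy, lie_zero, smul_lie, hxy, smul_zero, lie_zero, sub_zero]
  rw [ht.h_eq_coroot hα he hf] at hhy
  have hsmul := IsKilling.lie_eq_smul_of_mem_rootSpace hy (IsKilling.coroot α)
  exact smul_ne_zero hβ hy0 (hsmul.symm.trans hhy)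

theorem isD4Grading_rootSpace {r : EisensteinLattice →+ Dual k H} (hr : Function.Injective r)
    (hroot : r '' d4Roots = Set.range (IsKilling.rootSystem H).root) :
    IsD4Grading fun x ↦ (rootSpace H (r x)).toSubmodule := by
  have hmem {x} (hx : x ∈ d4Roots) : r x ∈ Set.range (IsKilling.rootSystem H).root :=
    hroot ▸ Set.mem_image_of_mem r hx
  have hbot {x} (hx0 : x ≠ 0) (hx : x ∉ d4Roots) : rootSpace H (r x) = ⊥ := by
    by_contra hne
    obtain ⟨y, hy, hyx⟩ := hroot ▸ mem_range_root_iff.2 ⟨(map_ne_zero_iff r hr).2 hx0, hne⟩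
    exact hx (hr hyx ▸ hy)
  refine ⟨?_, ?_, ?_, ?_, ?_, ?_⟩
  · exact LieSubmodule.iSupIndep_toSubmodule.2
      ((iSupIndep_genWeightSpace k H L).comp (DFunLike.coe_injective.comp hr))
  · rw [eq_top_iff, ← iSup_rootSpace_eq_top k L H]
    refine iSup_le fun l ↦ ?_
    by_cases hl : l ∈ Set.range r
    · obtain ⟨x, rfl⟩ := hl
      exact le_iSup (fun x ↦ (rootSpace H (r x)).toSubmodule) x
    · have hl0 : l ≠ 0 := fun h ↦ hl ⟨0, by rw [map_zero, h]⟩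
      have : rootSpace H l = ⊥ := by
        by_contra hne
        exact hl (Set.image_subset_range r _ (hroot ▸ mem_range_root_iff.2 ⟨hl0, hne⟩))
      simp [this]
  · exact fun x hx0 hx ↦ (LieSubmodule.toSubmodule_eq_bot _).2 (hbot hx0 hx)
  · exact fun x hx ↦ finrank_rootSpace_eq_one_of_mem_range_root (hmem hx)
  · intro x y u v hu hv
    rw [map_add]
    exact lie_mem_genWeightSpace_of_mem_genWeightSpace hu hv
  · intro x y u v hx hy hxy hu hv hu0 hv0
    obtain ⟨hne, hsub⟩ := ne_and_sub_notMem_of_add_mem_d4Roots x hx y hy hxy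
    refine lie_ne_zero_of_mem_rootSpace (hmem hx) ?_ ?_ hu hv hu0 hv0
    · exact map_add r x y ▸ hmem hxy
    · rw [← map_sub]
      exact hbot (sub_ne_zero.2 hne) hsub

variable {f : L →ₗ⁅k⁆ L}

lemma map_mem_rootSpace_dualAction (hfH : ∀ x ∈ H, f x ∈ H) (hf : ∀ x, f (f (f x)) = x)
    {l : Dual k H} {x : L} (hx : x ∈ rootSpace H l) : f x ∈ rootSpace H (dualAction f hfH l) := by
  refine (mem_genWeightSpace ..).2 fun h ↦ ⟨1, ?_⟩
  have hlie := IsKilling.lie_eq_smul_of_mem_rootSpace hx ⟨f (f h), hfH _ (hfH h h.2)⟩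
  have hflie := congrArg f hlie
  rw [LieSubalgebra.coe_bracket_of_module, LieHom.map_lie, hf, map_smul] at hflie
  simpa [dualAction_apply, sub_eq_zero] using hflie

lemma dualAction_mem_range_root (hfH : ∀ x ∈ H, f x ∈ H) (hf : ∀ x, f (f (f x)) = x)
    (hfree : ∀ x ∈ H, f x = x → x = 0) {l : Dual k H}
    (hl : l ∈ Set.range (IsKilling.rootSystem H).root) :
    dualAction f hfH l ∈ Set.range (IsKilling.rootSystem H).root := by
  rw [mem_range_root_iff] at hl ⊢
  refine ⟨fun h ↦ hl.1 ?_, fun h ↦ hl.2 ?_⟩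
  · simpa [h] using add_dualAction_add_dualAction hfH hf hfree l
  · rw [LieSubmodule.eq_bot_iff]
    intro x hx
    have hfx := map_mem_rootSpace_dualAction hfH hf hx
    rw [h, LieSubmodule.mem_bot] at hfx
    rw [← hf x, hfx, map_zero, map_zero]

theorem exists_isD4Rotation [(IsKilling.rootSystem H).IsIrreducible]
    (hfH : ∀ x ∈ H, f x ∈ H) (hL : finrank k L = 28) (hH : finrank k H = 4)
    (hf : ∀ x, f (f (f x)) = x) (hfree : ∀ x ∈ H, f x = x → x = 0) :
    ∃ W, IsD4Rotation W f := by
  have : Nontrivial L := nontrivial_of_finrank_pos (R := k) (hL ▸ by norm_num)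
  have hcard : Nat.card H.root = 24 := by
    have := card_root_add_finrank_eq_finrank H
    lia
  obtain ⟨r, hr, hrφ, hroot⟩ := exists_eisensteinHom_image_d4Roots_eq (IsKilling.rootSystem H)
    (by rw [Subspace.dual_finrank_eq, hH]; norm_num) hcard
    (add_dualAction_add_dualAction hfH hf hfree)
    fun l ↦ dualAction_mem_range_root hfH hf hfree
  refine ⟨_, isD4Grading_rootSpace hr hroot, hf, ?_, ?_⟩
  · intro x u hu
    rw [hrφ]
    exact map_mem_rootSpace_dualAction hfH hf hu
  · intro u hu hfu
    rw [map_zero] at hu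
    have hu : u ∈ rootSpace H (0 : H → k) := hu
    exact hfree u ((rootSpace_zero_eq k L H).le hu) hfu

end RootSpace

open Module LieAlgebra in
theorem fixed_subalgebra_of_D4_under_order_three_general {k L : Type*} [Field k] [CharZero k]
    [IsAlgClosed k] [LieRing L] [LieAlgebra k L] [FiniteDimensional k L] [IsSimple k L]
    (hdim : finrank k L = 28) (f : L →ₗ⁅k⁆ L) (hf3 : ∀ x, f (f (f x)) = x)
    (H : LieSubalgebra k L) [H.IsCartanSubalgebra] (hHdim : finrank k H = 4)
    (hfH : ∀ x ∈ H, f x ∈ H) (hfree : ∀ x ∈ H, f x = x → x = 0) :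
    ∃ K : LieSubalgebra k L, (K : Set L) = {x | f x = x} ∧ finrank k K = 8 ∧
      Nonempty (K ≃ₗ⁅k⁆ SpecialLinear.sl (Fin 3) k) := by
  obtain ⟨W, hW⟩ := exists_isD4Rotation hfH hdim hHdim hf3 hfree
  obtain ⟨ρ, e, he⟩ := hW.exists_isRootSection
  have hE := hW.isPauliBasis he
  exact ⟨fixedSubalgebra f, rfl, hE.finrank_eq_eight, hE.nonempty_lieEquiv_sl⟩

/-- Let `g` be the simple complex Lie algebra of type `D₄` (semisimple of dimension 28
with a Cartan subalgebra `H` of dimension 4), and let `f` be the order-3 automorphism of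
`g` induced by a fixed-point-free order-3 isometry `φ` of the root lattice `D₄`: `f`
preserves `H`, has no nonzero fixed vector in `H`, and moves every root space off itself
(since `φ` acts fixed-point-freely on the 24 roots). Then the fixed-point subalgebra
`g^f` has dimension `0 + 24/3 = 8` and, being semisimple, is isomorphic to `sl₃`. -/
theorem fixed_subalgebra_of_D4_under_order_three
    {L : Type*} [LieRing L] [LieAlgebra ℂ L] [FiniteDimensional ℂ L]
    [LieAlgebra.IsSimple ℂ L]
    (hdim : Module.finrank ℂ L = 28)
    (f : L ≃ₗ⁅ℂ⁆ L)
    (hf3 : ∀ x, f (f (f x)) = x)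
    (hfne : ∃ x, f x ≠ x)
    (H : LieSubalgebra ℂ L) (hcartan : H.IsCartanSubalgebra)
    (hHdim : Module.finrank ℂ H = 4)
    (hfH : ∀ x ∈ H, f x ∈ H)
    (hfree : ∀ x ∈ H, f x = x → x = 0)
    (hroot : ∀ χ : L → ℂ, (∃ h ∈ H, χ h ≠ 0) → ∀ x : L, x ≠ 0 →
      (∀ h ∈ H, ⁅h, x⁆ = χ h • x) → ¬ (∀ h ∈ H, ⁅h, f x⁆ = χ h • f x)) :
    ∃ K : LieSubalgebra ℂ L, (K : Set L) = {x | f x = x} ∧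
      Module.finrank ℂ K = 8 ∧
      Nonempty (K ≃ₗ⁅ℂ⁆ LieAlgebra.SpecialLinear.sl (Fin 3) ℂ) := by
  exact fixed_subalgebra_of_D4_under_order_three_general hdim (f : L →ₗ⁅ℂ⁆ L) hf3 H hHdim hfH hfree
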